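/- Let 𝒜 be a locally finite L-structure, ℬ a locally finite L'-structure, and (g, f) a semi-retraction between 𝒜 and ℬ. For a finite substructure A of 𝒜 set F(A) = ⟨g(A)⟩_ℬ, and for a finitely generated substructure C of ℬ set G(C) = ⟨f(C)⟩_𝒜. Then: (i) for all finite substructures A, B of 𝒜 and every L-embedding v : A → B, there is a unique L'-embedding g(v)' : F(A) → F(B) satisfying g(v)'(g(a)) = g(v(a)) for all a ∈ A; (ii) for every finitely generated substructure C of ℬ and every L'-embedding ψ : F(B) → C, the map Φ_{B,C}(ψ) : B → G(C) defined by b ↦ f(ψ(g(b))) is an L-embedding; and (iii) Φ_{A,C}(ψ ∘ g(v)') = Φ_{B,C}(ψ) ∘ v. (Hence (F, G, Φ) is a pre-adjunction between age(𝒜) and age(ℬ) with embeddings as morphisms.) -/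

import Mathlib

open FirstOrder FirstOrder.Language

/-- Two same-length tuples have the same quantifier-free type over ∅. -/
def SameQfType (L : FirstOrder.Language) (M : Type*) [L.Structure M] {n : ℕ}
    (x y : Fin n → M) : Prop :=
  ∀ φ : L.Formula (Fin n), φ.IsQF → (φ.Realize x ↔ φ.Realize y)

/-- A qftp-respecting injection between structures in possibly different languages. -/
def QftpRespecting (L L' : FirstOrder.Language) (M N : Type*) [L.Structure M] [L'.Structure N]
    (h : M → N) : Prop :=
  Function.Injective h ∧
    ∀ (n : ℕ) (x y : Fin n → M), SameQfType L M x y → SameQfType L' N (h ∘ x) (h ∘ y)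

/-- `(g, f)` is a semi-retraction between `M` and `N`: both maps are qftp-respecting
injections and `f ∘ g` is qftp-preserving (equivalently, an `L`-embedding of `M` into `M`). -/
def IsSemiRetraction (L L' : FirstOrder.Language) (M N : Type*)
    [L.Structure M] [L'.Structure N] (g : M → N) (f : N → M) : Prop :=
  QftpRespecting L L' M N g ∧ QftpRespecting L' L N M f ∧
    ∀ (n : ℕ) (x : Fin n → M), SameQfType L M x (f ∘ g ∘ x)

/-- `M` is locally finite: every finitely generated substructure is finite. -/
def StructLocallyFinite (L : FirstOrder.Language) (M : Type*) [L.Structure M] : Prop :=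
  ∀ S : L.Substructure M, S.FG → (S : Set M).Finite

/-- `M → (B)^A_{r,d}` for substructures. -/
def ArrowSub (L : FirstOrder.Language) (M : Type*) [L.Structure M]
    (A B : L.Substructure M) (r d : ℕ) : Prop :=
  ∀ c : L.Substructure M → Fin r, ∃ B' : L.Substructure M,
    Nonempty (B' ≃[L] B) ∧
      (c '' {A' : L.Substructure M | A' ≤ B' ∧ Nonempty (A' ≃[L] A)}).ncard ≤ d

/-- `M →ᵉ (B)^A_{r,d}` for embeddings. -/
def ArrowEmb (L : FirstOrder.Language) (M : Type*) [L.Structure M]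
    (A B : L.Substructure M) (r d : ℕ) : Prop :=
  ∀ c : (A ↪[L] M) → Fin r, ∃ h : B ↪[L] M,
    (c '' {j : A ↪[L] M | ∃ e : A ↪[L] B, j = h.comp e}).ncard ≤ d

/-- A structure is rigid if its only automorphism is the identity. -/
def IsRigidStructure (L : FirstOrder.Language) (M : Type*) [L.Structure M] : Prop :=
  ∀ σ : M ≃[L] M, ∀ x : M, σ x = x

/-! The theorem rests on the fact that a correspondence `x i ↦ y i` between families of the same
quantifier-free type extends to an embedding of the generated substructure: the image of `t(x)` is
`t(y)`, and whether two terms agree or a relation holds at terms is decided by the quantifier-free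
type of the finitely many entries involved. Since `g` preserves equality of quantifier-free types,
this extends `g a ↦ g (v a)` to `F(A) → F(B)`. For `ψ : F(B) → C`, the families `g b` and `ψ (g b)`
have the same type, hence so do `f (g b)` and `f (ψ (g b))`; as `f ∘ g` preserves types, so do `b`
and `f (ψ (g b))`. -/

section Terms

variable {L : FirstOrder.Language} {M : Type*} [L.Structure M] {ι : Type*}

theorem exists_fin_terms_realize_eq {k : ℕ} (ts : Fin k → L.Term ι) :
    ∃ (n : ℕ) (a : Fin n → ι) (us : Fin k → L.Term (Fin n)),
      ∀ (x : ι → M) (i : Fin k), (us i).realize (x ∘ a) = (ts i).realize x := by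
  classical
  let V : Finset ι := Finset.univ.biUnion fun i => (ts i).varFinset
  have hV (i : Fin k) : (ts i).varFinset ⊆ V :=
    Finset.subset_biUnion_of_mem (fun i => (ts i).varFinset) (Finset.mem_univ i)
  refine ⟨V.card, fun j => V.equivFin.symm j,
    fun i => (ts i).restrictVar fun b => V.equivFin ⟨b, hV i b.2⟩, fun x i => ?_⟩
  exact Term.realize_restrictVar x fun b => by
    simp only [Function.comp_apply, Equiv.symm_apply_apply]

theorem exists_term_realize_eq_of_mem_closure_range {x : ι → M} {m : M}
    (hm : m ∈ Substructure.closure L (Set.range x)) : ∃ t : L.Term ι, t.realize x = m := by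
  obtain ⟨t, rfl⟩ := Substructure.mem_closure_iff_exists_term.1 hm
  choose c hc using fun a : Set.range x => a.2
  exact ⟨t.relabel c, Term.realize_relabel.trans (congrArg t.realize (funext hc))⟩

end Terms

section Closure

variable {L : FirstOrder.Language} {M P : Type*} [L.Structure M] [L.Structure P]

theorem closure_preimage_subtype_eq_top (s : Set M) :
    Substructure.closure L ((Substructure.closure L s).subtype ⁻¹' s) = ⊤ := by
  let S := Substructure.closure L s
  apply Substructure.map_injective_of_injective (f := S.subtype.toHom) S.subtype.injective
  rw [Substructure.map_closure, ← Hom.range_eq_map, Substructure.range_subtype]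
  refine congrArg _ (Set.image_preimage_eq_of_subset fun m hm => ?_)
  exact ⟨⟨m, Substructure.subset_closure hm⟩, rfl⟩

theorem closure_hom_ext {s : Set M} {e e' : Substructure.closure L s →[L] P}
    (h : ∀ (m : M) (hm : m ∈ s), e ⟨m, Substructure.subset_closure hm⟩ =
      e' ⟨m, Substructure.subset_closure hm⟩) : e = e' :=
  Hom.eq_of_eqOn_dense (closure_preimage_subtype_eq_top s) fun m hm => h m hm

end Closure

/-- Two families indexed by an arbitrary type have the same quantifier-free type over ∅. Because
`SameQfType` is about finite tuples, this is expressed through corresponding finite subtuples,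
which loses nothing as a formula has finitely many variables. -/
def SameQfTypeFamily (L : FirstOrder.Language) {M : Type*} [L.Structure M] {ι : Type*}
    (x y : ι → M) : Prop :=
  ∀ (n : ℕ) (a : Fin n → ι), SameQfType L M (x ∘ a) (y ∘ a)

namespace SameQfTypeFamily

variable {L : FirstOrder.Language} {M : Type*} [L.Structure M] {ι : Type*} {x y z : ι → M}

theorem trans (hxy : SameQfTypeFamily L x y) (hyz : SameQfTypeFamily L y z) :
    SameQfTypeFamily L x z :=
  fun n a φ hφ => (hxy n a φ hφ).trans (hyz n a φ hφ)

theorem comp {κ : Type*} (h : SameQfTypeFamily L x y) (b : κ → ι) :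
    SameQfTypeFamily L (x ∘ b) (y ∘ b) :=
  fun n a => h n (b ∘ a)

theorem of_embeddings {P : Type*} [L.Structure P] (e e' : P ↪[L] M) :
    SameQfTypeFamily L e e' := by
  have realize_comp_iff {n : ℕ} (φ : L.Formula (Fin n)) (hφ : φ.IsQF) (d : P ↪[L] M)
      (p : Fin n → P) : φ.Realize (d ∘ p) ↔ φ.Realize p := by
    rw [Formula.Realize, Formula.Realize, ← hφ.realize_embedding d,
      Subsingleton.elim (d ∘ default) default]
  exact fun n p φ hφ => (realize_comp_iff φ hφ e p).trans (realize_comp_iff φ hφ e' p).symm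

theorem realize_term_eq_iff (h : SameQfTypeFamily L x y) (s t : L.Term ι) :
    s.realize x = t.realize x ↔ s.realize y = t.realize y := by
  obtain ⟨n, a, us, hus⟩ := exists_fin_terms_realize_eq (M := M) ![s, t]
  have hst := h n a ((us 0).equal (us 1)) (BoundedFormula.IsAtomic.equal _ _).isQF
  simpa only [Formula.realize_equal, hus, Matrix.cons_val_zero, Matrix.cons_val_one] using hst

theorem relMap_term_iff (h : SameQfTypeFamily L x y) {k : ℕ} (R : L.Relations k)
    (ts : Fin k → L.Term ι) :
    Structure.RelMap R (fun i => (ts i).realize x) ↔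
      Structure.RelMap R (fun i => (ts i).realize y) := by
  obtain ⟨n, a, us, hus⟩ := exists_fin_terms_realize_eq (M := M) ts
  have hR := h n a (R.formula us) (BoundedFormula.IsAtomic.rel _ _).isQF
  simpa only [Formula.realize_rel, hus] using hR

theorem exists_embedding (h : SameQfTypeFamily L x y) {S T : L.Substructure M}
    (hS : S = Substructure.closure L (Set.range x)) (hT : ∀ i, y i ∈ T) :
    ∃ e : S ↪[L] T, ∀ (i : ι) (hi : x i ∈ S), (e ⟨x i, hi⟩ : M) = y i := by
  have exists_term (s : S) : ∃ t : L.Term ι, t.realize x = s :=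
    exists_term_realize_eq_of_mem_closure_range (hS ▸ s.2)
  choose t ht using exists_term
  let e : S ↪[L] T :=
    { toFun := fun s => ⟨(t s).realize y, (t s).realize_mem y hT⟩
      inj' := fun s s' hss' => Subtype.ext <| by
        simpa only [ht] using (h.realize_term_eq_iff (t s) (t s')).2 (congrArg Subtype.val hss')
      map_fun' := fun F s => Subtype.ext <|
        (h.realize_term_eq_iff (t _) (Term.func F fun i => t (s i))).1 <| by
          simp only [Term.realize_func, ht]
          rfl
      map_rel' := fun R s => (h.relMap_term_iff R fun i => t (s i)).symm.trans <| by
        simp only [ht]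
        rfl }
  exact ⟨e, fun i hi => (h.realize_term_eq_iff (t ⟨x i, hi⟩) (Term.var i)).1 (ht _)⟩

end SameQfTypeFamily

section GeneratedImage

variable {L L' : FirstOrder.Language} {M N : Type*} [L.Structure M] [L'.Structure N]

variable (L') in
/-- The substructure `⟨h(A)⟩`: this is `F(A)` for `h = g`, and `G(C)` for `h = f` with the two
languages exchanged. -/
abbrev generatedImage (h : M → N) (A : L.Substructure M) : L'.Substructure N :=
  Substructure.closure L' (h '' (A : Set M))

variable (L') in
/-- The map `h` viewed as a map `A → ⟨h(A)⟩`. -/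
def toGeneratedImage (h : M → N) {A : L.Substructure M} (a : A) : generatedImage L' h A :=
  ⟨h a, Substructure.subset_closure (Set.mem_image_of_mem h a.2)⟩

theorem QftpRespecting.sameQfTypeFamily {h : M → N} (hh : QftpRespecting L L' M N h) {ι : Type*}
    {x y : ι → M} (hxy : SameQfTypeFamily L x y) : SameQfTypeFamily L' (h ∘ x) (h ∘ y) :=
  fun n a => hh.2 n (x ∘ a) (y ∘ a) (hxy n a)

theorem QftpRespecting.exists_embedding_generatedImage {h : M → N}
    (hh : QftpRespecting L L' M N h) {A B : L.Substructure M} (v : A ↪[L] B) :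
    ∃ w : generatedImage L' h A ↪[L'] generatedImage L' h B,
      ∀ a : A, w (toGeneratedImage L' h a) = toGeneratedImage L' h (v a) := by
  have hv : SameQfTypeFamily L' (h ∘ A.subtype) (h ∘ B.subtype.comp v) :=
    hh.sameQfTypeFamily (.of_embeddings _ _)
  obtain ⟨w, hw⟩ := hv.exists_embedding (congrArg _ (Set.image_eq_range h A))
    fun a => (toGeneratedImage L' h (v a)).2
  exact ⟨w, fun a => Subtype.ext (hw a _)⟩

theorem IsSemiRetraction.exists_transpose_embedding {g : M → N} {f : N → M}
    (hsr : IsSemiRetraction L L' M N g f) {B : L.Substructure M} {C : L'.Substructure N}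
    (ψ : generatedImage L' g B ↪[L'] C) :
    ∃ Φψ : B ↪[L] generatedImage L f C,
      ∀ b : B, Φψ b = toGeneratedImage L f (ψ (toGeneratedImage L' g b)) := by
  obtain ⟨-, hf, hfg⟩ := hsr
  have hψ : SameQfTypeFamily L' (g ∘ B.subtype)
      (C.subtype.comp ψ ∘ toGeneratedImage L' g (A := B)) :=
    (SameQfTypeFamily.of_embeddings (generatedImage L' g B).subtype (C.subtype.comp ψ)).comp
      (toGeneratedImage L' g)
  have hfgB : SameQfTypeFamily L B.subtype (f ∘ g ∘ B.subtype) :=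
    fun n b => hfg n (B.subtype ∘ b)
  have hB : B = Substructure.closure L (Set.range B.subtype) := by
    rw [Substructure.coe_subtype, Subtype.range_coe, Substructure.closure_eq]
  obtain ⟨Φψ, hΦψ⟩ := (hfgB.trans (hf.sameQfTypeFamily hψ)).exists_embedding hB
    fun b => (toGeneratedImage L f (ψ (toGeneratedImage L' g b))).2
  exact ⟨Φψ, fun b => Subtype.ext (hΦψ b b.2)⟩

end GeneratedImage

theorem semiRetraction_gives_preadjunction_on_ages_general
    {L L' : FirstOrder.Language} {M N : Type*} [L.Structure M] [L'.Structure N]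
    (g : M → N) (f : N → M) (hsr : IsSemiRetraction L L' M N g f)
    (A B : L.Substructure M) (v : A ↪[L] B) :
    ∃ w : (Substructure.closure L' (g '' (A : Set M))) ↪[L']
        (Substructure.closure L' (g '' (B : Set M))),
      (∀ (x : M) (hx : x ∈ A),
        (w ⟨g x, Substructure.subset_closure (Set.mem_image_of_mem g hx)⟩ : N)
          = g (v ⟨x, hx⟩)) ∧
      (∀ w' : (Substructure.closure L' (g '' (A : Set M))) ↪[L']
          (Substructure.closure L' (g '' (B : Set M))),
        (∀ (x : M) (hx : x ∈ A),
          (w' ⟨g x, Substructure.subset_closure (Set.mem_image_of_mem g hx)⟩ : N)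
            = g (v ⟨x, hx⟩)) → w' = w) ∧
      ∀ (C : L'.Substructure N) (ψ : (Substructure.closure L' (g '' (B : Set M))) ↪[L'] C),
        ∃ Φψ : B ↪[L] (Substructure.closure L (f '' (C : Set N))),
          (∀ (x : M) (hx : x ∈ B),
            (Φψ ⟨x, hx⟩ : M)
              = f (ψ ⟨g x, Substructure.subset_closure (Set.mem_image_of_mem g hx)⟩ : N)) ∧
          ∃ Φψw : A ↪[L] (Substructure.closure L (f '' (C : Set N))),
            (∀ (x : M) (hx : x ∈ A),
              (Φψw ⟨x, hx⟩ : M)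
                = f (ψ (w ⟨g x, Substructure.subset_closure (Set.mem_image_of_mem g hx)⟩)
                    : N)) ∧
            ∀ (x : M) (hx : x ∈ A), Φψw ⟨x, hx⟩ = Φψ (v ⟨x, hx⟩) := by
  obtain ⟨w, hw⟩ := hsr.1.exists_embedding_generatedImage v
  refine ⟨w, fun x hx => congrArg Subtype.val (hw ⟨x, hx⟩), fun w' hw' => ?_, fun C ψ => ?_⟩
  · refine Embedding.toHom_injective (closure_hom_ext ?_)
    rintro _ ⟨x, hx, rfl⟩
    exact Subtype.ext ((hw' x hx).trans (congrArg Subtype.val (hw ⟨x, hx⟩)).symm)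
  · obtain ⟨Φψ, hΦψ⟩ := hsr.exists_transpose_embedding ψ
    have hΦψw (a : A) : Φψ (v a) = toGeneratedImage L f (ψ (w (toGeneratedImage L' g a))) := by
      rw [hΦψ, hw]
    exact ⟨Φψ, fun x hx => congrArg Subtype.val (hΦψ ⟨x, hx⟩), Φψ.comp v,
      fun x hx => congrArg Subtype.val (hΦψw ⟨x, hx⟩), fun _ _ => rfl⟩

/-- Theorem 6.5 / `preadjage`: a semi-retraction `(g, f)` between locally
finite structures `𝒜` and `ℬ` yields a pre-adjunction between `age(𝒜)` and `age(ℬ)` with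
embeddings as morphisms, where `F(A) = ⟨g(A)⟩_ℬ` and `G(C) = ⟨f(C)⟩_𝒜`: (i) every embedding
`v : A → B` extends uniquely to an embedding `g(v)' : F(A) → F(B)` with `g(v)'(g a) = g (v a)`;
(ii) for every finitely generated `C ⊆ ℬ` and embedding `ψ : F(B) → C`, the map
`Φ_{B,C}(ψ) : b ↦ f(ψ(g b))` is an embedding `B → G(C)`; and (iii)
`Φ_{A,C}(ψ ∘ g(v)') = Φ_{B,C}(ψ) ∘ v`. -/
theorem semiRetraction_gives_preadjunction_on_ages
    {L L' : FirstOrder.Language} {M N : Type*} [L.Structure M] [L'.Structure N]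
    (g : M → N) (f : N → M)
    (hlfA : StructLocallyFinite L M) (hlfB : StructLocallyFinite L' N)
    (hsr : IsSemiRetraction L L' M N g f)
    (A B : L.Substructure M) (hAfin : (A : Set M).Finite) (hBfin : (B : Set M).Finite)
    (v : A ↪[L] B) :
    ∃ w : (Substructure.closure L' (g '' (A : Set M))) ↪[L']
        (Substructure.closure L' (g '' (B : Set M))),
      -- (i) `w = g(v)'` extends `g(v)` ...
      (∀ (x : M) (hx : x ∈ A),
        (w ⟨g x, Substructure.subset_closure (Set.mem_image_of_mem g hx)⟩ : N)
          = g (v ⟨x, hx⟩)) ∧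
      -- ... uniquely
      (∀ w' : (Substructure.closure L' (g '' (A : Set M))) ↪[L']
          (Substructure.closure L' (g '' (B : Set M))),
        (∀ (x : M) (hx : x ∈ A),
          (w' ⟨g x, Substructure.subset_closure (Set.mem_image_of_mem g hx)⟩ : N)
            = g (v ⟨x, hx⟩)) → w' = w) ∧
      ∀ (C : L'.Substructure N), C.FG →
        ∀ ψ : (Substructure.closure L' (g '' (B : Set M))) ↪[L'] C,
          -- (ii) `Φ_{B,C}(ψ) : b ↦ f (ψ (g b))` is an embedding `B → G(C)`
          ∃ Φψ : B ↪[L] (Substructure.closure L (f '' (C : Set N))),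
            (∀ (x : M) (hx : x ∈ B),
              (Φψ ⟨x, hx⟩ : M)
                = f (ψ ⟨g x, Substructure.subset_closure (Set.mem_image_of_mem g hx)⟩ : N)) ∧
            ∃ Φψw : A ↪[L] (Substructure.closure L (f '' (C : Set N))),
              (∀ (x : M) (hx : x ∈ A),
                (Φψw ⟨x, hx⟩ : M)
                  = f (ψ (w ⟨g x, Substructure.subset_closure (Set.mem_image_of_mem g hx)⟩)
                      : N)) ∧
              -- (iii) `Φ_{A,C}(ψ ∘ g(v)') = Φ_{B,C}(ψ) ∘ v`
              ∀ (x : M) (hx : x ∈ A), Φψw ⟨x, hx⟩ = Φψ (v ⟨x, hx⟩) := by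
  obtain ⟨w, hw, hw_unique, hΦ⟩ :=
    semiRetraction_gives_preadjunction_on_ages_general g f hsr A B v
  exact ⟨w, hw, hw_unique, fun C _ => hΦ C⟩
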